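/- arXiv:2602.04671 — 4 statements merged into one kernel-verified Lean document; each statement's English description precedes it below -/
import Mathlib

section
/- Let w be a real number. There is no smooth function y defined on an open neighbourhood U of 0 in ℝ such that y'(0) ≠ 0 and x²·y'(x) = w·y(x) for all x ∈ U. (Consequently, the vector field x²∂ₓ on ℝ admits no homogeneous coordinate around 0, i.e., it is not a weight vector field.) -/
/-!
Suppose `a · y' = w · y` near a zero `p` of `a`. Dividing by `x - p` gives
`slope a p x · y' x = w · slope y p x`. The derivative `y'` need not be continuous at `p`, but by
the mean value theorem `y' p` is a limit of values `y' ξ` with `ξ → p`, and passing to the limit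
along such `ξ` yields `a' p · y' p = w · y' p`. For `a' p = 0` and `y' p ≠ 0` this forces `w = 0`,
so `y'` vanishes wherever `a` does not, contradicting `y' ξ → y' p ≠ 0`.
-/

open Filter Set Topology

section MeanValue

variable {f : ℝ → ℝ} {p f' : ℝ}

theorem eventually_exists_deriv_eq_slope_right (hp : ContinuousWithinAt f (Ioi p) p)
    (hf : ∀ᶠ x in 𝓝[>] p, DifferentiableAt ℝ f x) :
    ∀ᶠ x in 𝓝[>] p, ∃ ξ ∈ Ioo p x, deriv f ξ = slope f p x := by
  obtain ⟨b, hpb, hb⟩ := mem_nhdsGT_iff_exists_Ioo_subset.mp hf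
  filter_upwards [Ioo_mem_nhdsGT hpb] with x hx
  have hcont : ContinuousOn f (Icc p x) := by
    intro z hz
    rcases hz.1.eq_or_lt with rfl | hpz
    · exact (continuousWithinAt_Ioi_iff_Ici.mp hp).mono Icc_subset_Ici_self
    · exact (hb ⟨hpz, hz.2.trans_lt hx.2⟩).continuousAt.continuousWithinAt
  have hdiff : DifferentiableOn ℝ f (Ioo p x) := fun z hz =>
    (hb ⟨hz.1, hz.2.trans hx.2⟩).differentiableWithinAt
  simpa only [slope_def_field] using exists_deriv_eq_slope f hx.1 hcont hdiff

theorem mapClusterPt_deriv_of_hasDerivWithinAt_Ioi (hp : HasDerivWithinAt f f' (Ioi p) p)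
    (hf : ∀ᶠ x in 𝓝[>] p, DifferentiableAt ℝ f x) :
    MapClusterPt f' (𝓝[>] p) (deriv f) := by
  obtain ⟨ξ, hξ⟩ := (eventually_exists_deriv_eq_slope_right hp.continuousWithinAt hf).choice
  have hξ_tendsto : Tendsto ξ (𝓝[>] p) (𝓝[>] p) := by
    refine tendsto_nhdsWithin_iff.mpr ⟨?_, hξ.mono fun x hx => hx.1.1⟩
    exact tendsto_of_tendsto_of_tendsto_of_le_of_le' tendsto_const_nhds
      (tendsto_id.mono_left nhdsWithin_le_nhds)
      (hξ.mono fun x hx => hx.1.1.le) (hξ.mono fun x hx => hx.1.2.le)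
  have hderiv_tendsto : Tendsto (deriv f ∘ ξ) (𝓝[>] p) (𝓝 f') :=
    ((hasDerivWithinAt_iff_tendsto_slope' self_notMem_Ioi).mp hp).congr'
      (hξ.mono fun x hx => hx.2.symm)
  exact hderiv_tendsto.mapClusterPt.of_comp hξ_tendsto

end MeanValue

/-- The function `y` is differentiable near `p` and homogeneous of weight `w` there with respect
to the vector field `a ∂ₓ`. Only differentiability is asked for, so `deriv y` may be discontinuous
at `p`. -/
def IsHomogeneousNear (a : ℝ → ℝ) (w : ℝ) (y : ℝ → ℝ) (p : ℝ) : Prop :=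
  ∀ᶠ x in 𝓝 p, DifferentiableAt ℝ y x ∧ a x * deriv y x = w * y x

namespace IsHomogeneousNear

variable {a y : ℝ → ℝ} {a' w p : ℝ}

theorem mapClusterPt_deriv (h : IsHomogeneousNear a w y p) :
    MapClusterPt (deriv y p) (𝓝[>] p) (deriv y) :=
  mapClusterPt_deriv_of_hasDerivWithinAt_Ioi h.self_of_nhds.1.hasDerivAt.hasDerivWithinAt
    (nhdsWithin_le_nhds (h.mono fun _ hx => hx.1))

theorem eventually_slope_mul_deriv (h : IsHomogeneousNear a w y p) (hap : a p = 0) :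
    ∀ᶠ x in 𝓝 p, slope a p x * deriv y x = w * slope y p x := by
  have hwy : w * y p = 0 := by rw [← h.self_of_nhds.2, hap, zero_mul]
  filter_upwards [h] with x hx
  calc slope a p x * deriv y x = a x * deriv y x / (x - p) := by
        rw [slope_def_field, hap, sub_zero, div_mul_eq_mul_div]
    _ = (w * y x - w * y p) / (x - p) := by rw [hx.2, hwy, sub_zero]
    _ = w * slope y p x := by rw [slope_def_field, ← mul_sub, mul_div_assoc]

theorem mul_deriv_eq_weight_mul_deriv (h : IsHomogeneousNear a w y p) (hap : a p = 0)
    (ha : HasDerivAt a a' p) : a' * deriv y p = w * deriv y p := by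
  obtain ⟨l, hl, hderiv⟩ := mapClusterPt_iff_ultrafilter.mp h.mapClusterPt_deriv
  have hl_ne : (l : Filter ℝ) ≤ 𝓝[≠] p := hl.trans (nhdsGT_le_nhdsNE p)
  have ha_slope : Tendsto (slope a p) l (𝓝 a') := ha.tendsto_slope.mono_left hl_ne
  have hy_slope : Tendsto (slope y p) l (𝓝 (deriv y p)) :=
    h.self_of_nhds.1.hasDerivAt.tendsto_slope.mono_left hl_ne
  have hslopes : ∀ᶠ x in l, slope a p x * deriv y x = w * slope y p x :=
    (hl.trans nhdsWithin_le_nhds) (h.eventually_slope_mul_deriv hap)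
  exact tendsto_nhds_unique_of_eventuallyEq (ha_slope.mul hderiv) (hy_slope.const_mul w) hslopes

theorem deriv_eq_zero_of_weight_zero (h : IsHomogeneousNear a 0 y p)
    (ha : ∀ᶠ x in 𝓝[>] p, a x ≠ 0) : deriv y p = 0 := by
  by_contra hne
  have hfreq : ∃ᶠ x in 𝓝[>] p, deriv y x ≠ 0 :=
    h.mapClusterPt_deriv.frequently (isOpen_ne.mem_nhds hne)
  obtain ⟨x, hyx, hax, hx⟩ := (hfreq.and_eventually (ha.and (nhdsWithin_le_nhds h))).exists
  exact mul_ne_zero hax hyx (hx.2.trans (zero_mul _))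

theorem deriv_eq_zero (h : IsHomogeneousNear a w y p) (hap : a p = 0) (ha' : HasDerivAt a 0 p)
    (ha : ∀ᶠ x in 𝓝[>] p, a x ≠ 0) : deriv y p = 0 := by
  have hw : w * deriv y p = 0 := by rw [← h.mul_deriv_eq_weight_mul_deriv hap ha', zero_mul]
  rcases mul_eq_zero.mp hw with rfl | hy
  · exact h.deriv_eq_zero_of_weight_zero ha
  · exact hy

end IsHomogeneousNear

theorem stmt_0_general {a : ℝ → ℝ} {p : ℝ} (hap : a p = 0) (ha' : HasDerivAt a 0 p)
    (ha : ∀ᶠ x in 𝓝[>] p, a x ≠ 0) (w : ℝ) :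
    ¬ ∃ (U : Set ℝ) (y : ℝ → ℝ), IsOpen U ∧ p ∈ U ∧
      DifferentiableOn ℝ y U ∧ deriv y p ≠ 0 ∧
      ∀ x ∈ U, a x * deriv y x = w * y x := by
  rintro ⟨U, y, hU, hpU, hy, hne, hode⟩
  have hhom : IsHomogeneousNear a w y p := by
    filter_upwards [hU.mem_nhds hpU] with x hx
    exact ⟨hy.differentiableAt (hU.mem_nhds hx), hode x hx⟩
  exact hne (hhom.deriv_eq_zero hap ha' ha)

/-- There is no smooth function `y` defined on an open neighbourhood `U` of
`0` in `ℝ` such that `y'(0) ≠ 0` and `x² ⬝ y'(x) = w ⬝ y(x)` for all `x ∈ U`. -/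
theorem stmt_0 (w : ℝ) :
    ¬ ∃ (U : Set ℝ) (y : ℝ → ℝ), IsOpen U ∧ (0 : ℝ) ∈ U ∧
      ContDiffOn ℝ (⊤ : ℕ∞) y U ∧ deriv y 0 ≠ 0 ∧
      ∀ x ∈ U, x ^ 2 * deriv y x = w * y x := by
  rintro ⟨U, y, hU, h0, hy, hne, hode⟩
  have hsq_deriv : HasDerivAt (fun x : ℝ => x ^ 2) 0 0 := by simpa using hasDerivAt_pow 2 (0 : ℝ)
  have hsq_ne : ∀ᶠ x : ℝ in 𝓝[>] 0, x ^ 2 ≠ 0 :=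
    eventually_mem_nhdsWithin.mono fun _ hx => pow_ne_zero 2 (ne_of_gt hx)
  exact stmt_0_general (zero_pow two_ne_zero) hsq_deriv hsq_ne w
    ⟨U, y, hU, h0, hy.differentiableOn (by simp), hne, hode⟩
end

section
/- Non-vanishing vector fields admit homogeneous coordinates with prescribed weights: let X be a smooth vector field on an open set U ⊆ ℝⁿ and let m ∈ U with X(m) ≠ 0. Then for any real numbers w ≠ 0 and v₂,…,vₙ, there exist an open neighbourhood V ⊆ U of m and smooth functions x, z², …, zⁿ : V → ℝ whose differentials are linearly independent at every point of V, such that x(m) = 1, zⁱ(m) = 0 for i = 2,…,n, and Dx(y)(X(y)) = w·x(y), Dzⁱ(y)(X(y)) = vᵢ·zⁱ(y) for all y ∈ V. In these coordinates X = w·x ∂ₓ + Σᵢ vᵢ zⁱ ∂_{zⁱ}. -/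
/-!
The only hard input is that the flow `φ` of a `C^k` field is `C^k` in `(s, y)`. Rescale the orbit of
`y` up to time `s` to the curve `γ t = φ (t s, y)` on `[0, 1]`; it solves
`γ - y - s ∫₀ᵗ X (γ τ) dτ = 0`, an equation in `C([0, 1], E)` that is `C^k` in `(s, y, γ)` and whose
derivative in `γ` at `s = 0` is the identity. By the implicit function theorem `γ`, and hence
`φ (s, y) = γ 1`, is a `C^k` function of `(s, y)`.

Flowing a hyperplane transverse to `X m` gives coordinates `(t, ζ², …, ζⁿ)` centred at `m` in which
`X = ∂ₜ`. Then `x = exp (w t)` and `zⁱ = ζⁱ exp (vᵢ t)` have the prescribed weights.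
-/

open Filter Metric Set Topology
open scoped unitInterval

universe u

section Superposition

variable {K : Type*} [TopologicalSpace K] [CompactSpace K]
  {E F : Type u} [NormedAddCommGroup E] [NormedSpace ℝ E] [NormedAddCommGroup F] [NormedSpace ℝ F]

variable (K E F) in
/-- The bilinear pairing `(A, h) ↦ (t ↦ A t (h t))` of continuous families of operators with
continuous curves; it expresses the derivative of the superposition operator `α ↦ f ∘ α`. -/
noncomputable def pointwiseApplyCLM : C(K, E →L[ℝ] F) →L[ℝ] C(K, E) →L[ℝ] C(K, F) :=
  LinearMap.mkContinuous₂
    (LinearMap.mk₂ ℝ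
      (fun (A : C(K, E →L[ℝ] F)) (h : C(K, E)) ↦ (⟨fun t ↦ A t (h t), by fun_prop⟩ : C(K, F)))
      (by intros; ext; simp) (by intros; ext; simp) (by intros; ext; simp) (by intros; ext; simp))
    1 fun A h ↦ by
      refine (ContinuousMap.norm_le _ (by positivity)).2 fun t ↦ ?_
      rw [one_mul]
      exact (A t).le_of_opNorm_le_of_le (A.norm_coe_le_norm t) (h.norm_coe_le_norm t)

theorem hasFDerivAt_postcomp {f : C(E, F)} {f' : C(E, E →L[ℝ] F)}
    (hf : ∀ x, HasFDerivAt f (f' x) x) (α : C(K, E)) :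
    HasFDerivAt (fun β : C(K, E) ↦ f.comp β) (pointwiseApplyCLM K E F (f'.comp α)) α := by
  rw [hasFDerivAt_iff_isLittleO_nhds_zero, Asymptotics.isLittleO_iff]
  intro ε hε
  -- Compactness of the range of `α` makes the mean value estimate uniform along `α`.
  obtain ⟨δ, hδ, hf'_close⟩ : ∃ δ > 0, ∀ t x, dist (α t) x < δ → dist (f' (α t)) (f' x) < ε := by
    have hunif := (isCompact_range α.continuous).uniformContinuousAt_of_continuousAt f'
      (fun a _ ↦ f'.continuous.continuousAt) (dist_mem_uniformity hε)
    obtain ⟨δ, hδ, h⟩ := mem_uniformity_dist.1 hunif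
    exact ⟨δ, hδ, fun t x hx ↦ h hx (mem_range_self t)⟩
  filter_upwards [ball_mem_nhds 0 hδ] with h hh
  refine (ContinuousMap.norm_le _ (by positivity)).2 fun t ↦ ?_
  have hht : ‖h t‖ < δ := (h.norm_coe_le_norm t).trans_lt (mem_ball_zero_iff.1 hh)
  have hmean : ‖f (α t + h t) - f (α t) - f' (α t) (α t + h t - α t)‖ ≤
      ε * ‖α t + h t - α t‖ :=
    (convex_ball (α t) δ).norm_image_sub_le_of_norm_hasFDerivWithin_le'
      (fun x _ ↦ (hf x).hasFDerivWithinAt)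
      (fun x hx ↦ by
        rw [← dist_eq_norm, dist_comm]
        exact (hf'_close t x (mem_ball'.1 hx)).le)
      (mem_ball_self hδ) (by simpa using hht)
  rw [add_sub_cancel_left] at hmean
  calc ‖f (α t + h t) - f (α t) - f' (α t) (h t)‖
    _ ≤ ε * ‖h t‖ := hmean
    _ ≤ ε * ‖h‖ := by gcongr; exact h.norm_coe_le_norm t

theorem contDiff_postcomp_nat (k : ℕ) {f : C(E, F)} (hf : ContDiff ℝ k f) :
    ContDiff ℝ k fun α : C(K, E) ↦ f.comp α := by
  induction k generalizing F with
  | zero => exact contDiff_zero.2 (ContinuousMap.continuous_postcomp f)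
  | succ k ih =>
    rw [Nat.cast_add, Nat.cast_one] at hf ⊢
    obtain ⟨f', hf', hff'⟩ := contDiff_succ_iff_hasFDerivAt.1 hf
    let f'c : C(E, E →L[ℝ] F) := ⟨f', hf'.continuous⟩
    exact contDiff_succ_iff_hasFDerivAt.2
      ⟨fun α ↦ pointwiseApplyCLM K E F (f'c.comp α),
        (pointwiseApplyCLM K E F).contDiff.fun_comp (ih (f := f'c) hf'),
        hasFDerivAt_postcomp (f' := f'c) hff'⟩

theorem contDiff_postcomp {k : ℕ∞} {f : C(E, F)} (hf : ContDiff ℝ k f) :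
    ContDiff ℝ k fun α : C(K, E) ↦ f.comp α :=
  contDiff_iff_forall_nat_le.2 fun j hj ↦
    contDiff_postcomp_nat j (contDiff_iff_forall_nat_le.1 hf j hj)

end Superposition

theorem exists_openPartialHomeomorph_of_contDiffOn {𝕂 E F : Type*} [RCLike 𝕂]
    [NormedAddCommGroup E] [NormedSpace 𝕂 E] [CompleteSpace E]
    [NormedAddCommGroup F] [NormedSpace 𝕂 F] {k : WithTop ℕ∞} (hk : k ≠ 0)
    {f : E → F} {W : Set E} (hW : IsOpen W) (hf : ContDiffOn 𝕂 k f W) {a : E} (ha : a ∈ W)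
    (hfa : (fderiv 𝕂 f a).IsInvertible) :
    ∃ e : OpenPartialHomeomorph E F, ⇑e = f ∧ a ∈ e.source ∧ e.source ⊆ W ∧
      (∀ x ∈ e.source, (fderiv 𝕂 f x).IsInvertible) ∧ ContDiffOn 𝕂 k e.symm e.target := by
  have hf_at (x : E) (hx : x ∈ W) : ContDiffAt 𝕂 k f x := hf.contDiffAt (hW.mem_nhds hx)
  have hf_deriv (x : E) (hx : x ∈ W) : HasFDerivAt f (fderiv 𝕂 f x) x :=
    ((hf_at x hx).differentiableAt hk).hasFDerivAt
  let W' := W ∩ fderiv 𝕂 f ⁻¹' range ((↑) : (E ≃L[𝕂] F) → E →L[𝕂] F)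
  have hW' : IsOpen W' :=
    (hf.continuousOn_fderiv_of_isOpen hW
      (ENat.one_le_iff_ne_zero_withTop.2 hk)).isOpen_inter_preimage hW ContinuousLinearEquiv.isOpen
  obtain ⟨T, hT⟩ := hfa
  have hfT : HasFDerivAt f (T : E →L[𝕂] F) a := hT ▸ hf_deriv a ha
  let e := ((hf_at a ha).toOpenPartialHomeomorph f hfT hk).restrOpen W' hW'
  have heW' : e.source ⊆ W' := inter_subset_right
  refine ⟨e, rfl, ⟨(hf_at a ha).mem_toOpenPartialHomeomorph_source hfT hk, ha, T, hT⟩,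
    heW'.trans inter_subset_left, fun x hx ↦ (heW' hx).2, fun y hy ↦ ?_⟩
  obtain ⟨hyW, S, hS⟩ := heW' (e.map_target hy)
  exact (e.contDiffAt_symm hy (f₀' := S) (hS ▸ hf_deriv _ hyW) (hf_at _ hyW)).contDiffWithinAt

theorem eventually_contDiffAt_implicitFunction {𝕂 E₁ E₂ F : Type*} [RCLike 𝕂]
    [NormedAddCommGroup E₁] [NormedSpace 𝕂 E₁] [CompleteSpace E₁]
    [NormedAddCommGroup E₂] [NormedSpace 𝕂 E₂] [CompleteSpace E₂]
    [NormedAddCommGroup F] [NormedSpace 𝕂 F] [CompleteSpace F]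
    {k : WithTop ℕ∞} (hk : k ≠ 0) {f : E₁ × E₂ → F} {u : E₁ × E₂} (hfu : ContDiffAt 𝕂 k f u)
    (hf : ∀ᶠ p in 𝓝 u, ContDiffAt 𝕂 k f p)
    (hinv : (fderiv 𝕂 f u ∘L .inr 𝕂 E₁ E₂).IsInvertible) :
    ∀ᶠ x in 𝓝 u.1, ContDiffAt 𝕂 k (hfu.implicitFunction hk hinv) x := by
  set ψ := hfu.implicitFunction hk hinv with hψ
  have hψu : ContDiffAt 𝕂 1 ψ u.1 :=
    (hfu.contDiffAt_implicitFunction hk hinv).of_le (ENat.one_le_iff_ne_zero_withTop.2 hk)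
  have hψ_cont : ∀ᶠ x in 𝓝 u.1, ContinuousAt ψ x :=
    (hψu.eventually (by simp)).mono fun _ h ↦ h.continuousAt
  have hgraph : Tendsto (fun x ↦ (x, ψ x)) (𝓝 u.1) (𝓝 u) := by
    have := continuousAt_id.tendsto.prodMk_nhds hψu.continuousAt.tendsto
    rwa [id, hψ, hfu.implicitFunction_apply_self hk hinv] at this
  have hinv_near : ∀ᶠ p in 𝓝 u, (fderiv 𝕂 f p ∘L .inr 𝕂 E₁ E₂).IsInvertible := by
    have hcont : ContinuousAt (fun p ↦ fderiv 𝕂 f p ∘L .inr 𝕂 E₁ E₂) u :=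
      (hfu.continuousAt_fderiv hk).clm_comp continuousAt_const
    exact hcont.eventually (ContinuousLinearEquiv.isOpen.mem_nhds hinv)
  filter_upwards [hψ_cont, hgraph.eventually hf, hgraph.eventually hinv_near,
    (hfu.eventually_apply_implicitFunction hk hinv).eventually_nhds]
    with x hψx hfx hinvx hψ_level
  -- Local uniqueness identifies `ψ` with the implicit function based at `(x, ψ x)`.
  have hψ_eq : hfx.implicitFunction hk hinvx =ᶠ[𝓝 x] ψ := by
    have hgraph_x : Tendsto (fun x' ↦ (x', ψ x')) (𝓝 x) (𝓝 (x, ψ x)) :=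
      tendsto_id.prodMk_nhds hψx.tendsto
    filter_upwards [hψ_level, hgraph_x.eventually
      (hfx.eventually_apply_eq_iff_implicitFunction hk hinvx)] with x' hx' hiff
    exact hiff.1 (hx'.trans hψ_level.self_of_nhds.symm)
  exact (hfx.contDiffAt_implicitFunction hk hinvx).congr_of_eventuallyEq hψ_eq.symm

theorem exists_contDiff_eventuallyEq {E F : Type*} [NormedAddCommGroup E] [NormedSpace ℝ E]
    [HasContDiffBump E] [NormedAddCommGroup F] [NormedSpace ℝ F] {k : ℕ∞} {U : Set E}
    (hU : IsOpen U) {f : E → F} (hf : ContDiffOn ℝ k f U) {m : E} (hm : m ∈ U) :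
    ∃ g : E → F, ContDiff ℝ k g ∧ g =ᶠ[𝓝 m] f := by
  obtain ⟨R, hR, hRU⟩ := nhds_basis_closedBall.mem_iff.1 (hU.mem_nhds hm)
  let b : ContDiffBump m := ⟨R / 2, R, half_pos hR, half_lt_self hR⟩
  refine ⟨fun y ↦ b y • f y, contDiff_iff_contDiffAt.2 fun y ↦ ?_, ?_⟩
  · by_cases hy : y ∈ tsupport b
    · exact b.contDiffAt.smul (hf.contDiffAt (hU.mem_nhds (hRU (b.tsupport_eq ▸ hy))))
    · have hb : (fun y ↦ b y • f y) =ᶠ[𝓝 y] fun _ ↦ 0 := by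
        filter_upwards [notMem_tsupport_iff_eventuallyEq.1 hy] with z hz
        simp [hz]
      exact contDiffAt_const.congr_of_eventuallyEq hb
  · filter_upwards [b.eventuallyEq_one] with y hy
    simp [hy]

section Volterra

variable (E : Type*) [NormedAddCommGroup E] [NormedSpace ℝ E]

/-- The operator `β ↦ (t ↦ ∫₀ᵗ β)` on continuous curves over the unit interval. The integrand is
extended to all of `ℝ` by `IccExtend`, which does not affect the integrals in question. -/
noncomputable def volterraCLM : C(I, E) →L[ℝ] C(I, E) :=
  LinearMap.mkContinuous
    { toFun β := ⟨fun t ↦ ∫ τ in (0 : ℝ)..t, IccExtend zero_le_one β τ,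
        (intervalIntegral.continuous_primitive
          (fun _ _ ↦ β.continuous.Icc_extend'.intervalIntegrable _ _) 0).comp
          continuous_subtype_val⟩
      map_add' β γ := ContinuousMap.ext fun t ↦
        intervalIntegral.integral_add (β.continuous.Icc_extend'.intervalIntegrable _ _)
          (γ.continuous.Icc_extend'.intervalIntegrable _ _)
      map_smul' c β := ContinuousMap.ext fun t ↦ intervalIntegral.integral_smul c _ } 1 fun β ↦ by
    refine (ContinuousMap.norm_le _ (by positivity)).2 fun t ↦ ?_
    calc ‖∫ τ in (0 : ℝ)..t, IccExtend zero_le_one β τ‖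
      _ ≤ ‖β‖ * |(t : ℝ) - 0| :=
        intervalIntegral.norm_integral_le_of_norm_le_const fun τ _ ↦ β.norm_coe_le_norm _
      _ ≤ 1 * ‖β‖ := by
        rw [sub_zero, abs_of_nonneg t.2.1, mul_comm]
        gcongr
        exact t.2.2

variable {E}

theorem volterraCLM_apply (β : C(I, E)) (t : I) :
    volterraCLM E β t = ∫ τ in (0 : ℝ)..t, IccExtend zero_le_one β τ := rfl

end Volterra

section PicardMap

variable {E : Type u} [NormedAddCommGroup E] [NormedSpace ℝ E]

/-- The map whose zeros `((s, y), γ)` are the integral curves of `Y` issued from `y` and run for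
time `s`, reparametrised to the unit interval: `γ t = y + s ∫₀ᵗ Y (γ τ) dτ`. -/
noncomputable def picardDefect (Y : C(E, E)) (q : (ℝ × E) × C(I, E)) : C(I, E) :=
  q.2 - ContinuousLinearMap.const ℝ I q.1.2 - q.1.1 • volterraCLM E (Y.comp q.2)

theorem contDiff_picardDefect {k : ℕ∞} {Y : C(E, E)} (hY : ContDiff ℝ k Y) :
    ContDiff ℝ k (picardDefect Y) := by
  have hvolterra : ContDiff ℝ k fun q : (ℝ × E) × C(I, E) ↦ volterraCLM E (Y.comp q.2) :=
    (volterraCLM E).contDiff.comp ((contDiff_postcomp hY).comp contDiff_snd)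
  have hconst : ContDiff ℝ k fun q : (ℝ × E) × C(I, E) ↦ ContinuousLinearMap.const ℝ I q.1.2 :=
    (ContinuousLinearMap.const ℝ I : E →L[ℝ] C(I, E)).contDiff.fun_comp
      (contDiff_snd.comp contDiff_fst)
  exact (contDiff_snd.sub hconst).sub ((contDiff_fst.comp contDiff_fst).smul hvolterra)

theorem isInvertible_fderiv_picardDefect_comp_inr {Y : C(E, E)} (hY : ContDiff ℝ 1 Y) (m : E)
    (γ : C(I, E)) :
    (fderiv ℝ (picardDefect Y) ((0, m), γ) ∘L .inr ℝ (ℝ × E) C(I, E)).IsInvertible := by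
  have hpartial := ((contDiff_picardDefect (k := 1) hY).differentiable one_ne_zero
    ((0, m), γ)).hasFDerivAt.comp γ (hasFDerivAt_prodMk_right (0, m) γ)
  have hfrozen : picardDefect Y ∘ (fun β ↦ ((0, m), β)) =
      fun β ↦ β - ContinuousLinearMap.const ℝ I m := by
    ext1 β
    simp [picardDefect]
  rw [hfrozen] at hpartial
  rw [hpartial.unique ((hasFDerivAt_id γ).sub_const _)]
  exact ⟨.refl ℝ _, rfl⟩

end PicardMap

theorem mul_mem_ball_zero_prod {E : Type*} [PseudoMetricSpace E] {m : E} {δ : ℝ} {p : ℝ × E}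
    (hp : p ∈ ball (0, m) δ) (t : I) : (t * p.1, p.2) ∈ ball ((0 : ℝ), m) δ := by
  rw [mem_ball, Prod.dist_eq, max_lt_iff, dist_zero_right] at hp ⊢
  refine ⟨(norm_mul_le _ _).trans_lt (lt_of_le_of_lt ?_ hp.1), hp.2⟩
  exact mul_le_of_le_one_left (norm_nonneg _) (by simpa [abs_of_nonneg t.2.1] using t.2.2)

section LocalFlow

variable {E : Type u} [NormedAddCommGroup E] [NormedSpace ℝ E]

/-- `φ (s, y)` is the value at time `s` of an integral curve of `X` issued from `y`, for `(s, y)` in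
the domain `W`. The domain need not be open nor its time slices connected. -/
structure IsLocalFlow (X : E → E) (φ : ℝ × E → E) (W : Set (ℝ × E)) : Prop where
  map_zero : ∀ y, (0, y) ∈ W → φ (0, y) = y
  hasDerivAt : ∀ p ∈ W, HasDerivAt (fun s ↦ φ (s, p.2)) (X (φ p)) p.1

theorem exists_isLocalFlow_continuousOn [CompleteSpace E] {X : E → E} {m : E}
    (hX : ContDiffAt ℝ 1 X m) :
    ∃ φ, ∃ δ > 0, IsLocalFlow X φ (ball (0, m) δ) ∧ ContinuousOn φ (ball (0, m) δ) := by
  obtain ⟨ε, hε, _, r, _, _, hr, hPL⟩ := IsPicardLindelof.of_contDiffAt_one hX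
  obtain ⟨α, hα, hα_cont⟩ :=
    (hPL 0).exists_forall_mem_closedBall_eq_hasDerivWithinAt_continuousOn
  simp only [zero_sub, zero_add] at hα hα_cont
  have hball (p : ℝ × E) (hp : p ∈ ball (0, m) (min ε r)) :
      p.1 ∈ Ioo (-ε) ε ∧ p.2 ∈ closedBall m r := by
    rw [mem_ball, Prod.dist_eq, max_lt_iff, Real.dist_0_eq_abs] at hp
    exact ⟨abs_lt.1 (hp.1.trans_le (min_le_left _ _)), (hp.2.trans_le (min_le_right _ _)).le⟩
  refine ⟨α ∘ Prod.swap, min ε r, lt_min hε hr, ⟨fun y hy ↦ (hα y (hball _ hy).2).1,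
    fun p hp ↦ ?_⟩, hα_cont.comp continuous_swap.continuousOn fun p hp ↦
      ⟨(hball p hp).2, Ioo_subset_Icc_self (hball p hp).1⟩⟩
  obtain ⟨hp₁, hp₂⟩ := hball p hp
  exact ((hα p.2 hp₂).2 p.1 (Ioo_subset_Icc_self hp₁)).hasDerivAt (Icc_mem_nhds hp₁.1 hp₁.2)

namespace IsLocalFlow

variable {φ : ℝ × E → E} {W : Set (ℝ × E)}

theorem picardDefect_eq_zero [CompleteSpace E] {Y : C(E, E)} (hφ : IsLocalFlow Y φ W) {p : ℝ × E}
    (hpW : ∀ t : I, (t * p.1, p.2) ∈ W) {γ : C(I, E)} (hγ : ∀ t : I, γ t = φ (t * p.1, p.2)) :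
    picardDefect Y (p, γ) = 0 := by
  ext t
  have hderiv (τ : ℝ) (hτ : τ ∈ uIcc 0 (t : ℝ)) : HasDerivAt (fun τ ↦ φ (τ * p.1, p.2))
      (p.1 • IccExtend zero_le_one (Y.comp γ) τ) τ := by
    have hτI : τ ∈ I := uIcc_subset_Icc (by simp) t.2 hτ
    rw [IccExtend_of_mem _ _ hτI, ContinuousMap.comp_apply, hγ]
    exact (hφ.hasDerivAt _ (hpW ⟨τ, hτI⟩)).scomp τ (hasDerivAt_mul_const p.1)
  have hint := intervalIntegral.integral_eq_sub_of_hasDerivAt hderiv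
    (((Y.comp γ).continuous.Icc_extend'.const_smul p.1).intervalIntegrable _ _)
  have hzero : φ (0, p.2) = p.2 := hφ.map_zero _ (by simpa using hpW 0)
  rw [intervalIntegral.integral_smul, ← volterraCLM_apply, zero_mul, hzero, ← hγ] at hint
  simp [picardDefect, hint]

theorem eventually_exists_picardDefect_eq_zero [CompleteSpace E] {Y : C(E, E)} {m : E} {δ : ℝ}
    (hδ : 0 < δ) (hφ : IsLocalFlow Y φ (ball (0, m) δ)) (hφ_cont : ContinuousOn φ (ball (0, m) δ))
    {N : Set ((ℝ × E) × C(I, E))} (hN : N ∈ 𝓝 ((0, m), .const I m)) :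
    ∀ᶠ p in 𝓝 ((0 : ℝ), m), ∃ γ, (p, γ) ∈ N ∧ picardDefect Y (p, γ) = 0 ∧ γ 1 = φ p := by
  obtain ⟨ρ, hρ, hρN⟩ := Metric.mem_nhds_iff.1 hN
  have hcenter : ((0 : ℝ), m) ∈ ball ((0 : ℝ), m) δ := mem_ball_self hδ
  obtain ⟨η, hη, hφη⟩ := Metric.continuousAt_iff.1
    (hφ_cont.continuousAt (isOpen_ball.mem_nhds hcenter)) ρ hρ
  rw [hφ.map_zero m hcenter] at hφη
  filter_upwards [ball_mem_nhds _ hδ, ball_mem_nhds _ hη, ball_mem_nhds _ hρ] with p hpδ hpη hpρ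
  let γ : C(I, E) := ⟨fun t ↦ φ (t * p.1, p.2),
    hφ_cont.comp_continuous (by fun_prop) (mul_mem_ball_zero_prod hpδ)⟩
  refine ⟨γ, hρN ?_, hφ.picardDefect_eq_zero (mul_mem_ball_zero_prod hpδ) fun _ ↦ rfl,
    by simp [γ]⟩
  rw [mem_ball, Prod.dist_eq, max_lt_iff, ContinuousMap.dist_lt_iff hρ]
  exact ⟨hpρ, fun t ↦ hφη (mul_mem_ball_zero_prod hpη t)⟩

theorem eventually_contDiffAt [CompleteSpace E] {k : ℕ∞} (hk : k ≠ 0) {Y : C(E, E)}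
    (hY : ContDiff ℝ k Y) {m : E} {δ : ℝ} (hδ : 0 < δ) (hφ : IsLocalFlow Y φ (ball (0, m) δ))
    (hφ_cont : ContinuousOn φ (ball (0, m) δ)) :
    ∀ᶠ p in 𝓝 (0, m), ContDiffAt ℝ k φ p := by
  have hk' : (k : WithTop ℕ∞) ≠ 0 := by exact_mod_cast hk
  have hG := contDiff_picardDefect hY
  have hinv := isInvertible_fderiv_picardDefect_comp_inr
    (hY.of_le (ENat.one_le_iff_ne_zero_withTop.2 hk')) m (.const I m)
  let ψ := (hG.contDiffAt (x := ((0, m), .const I m))).implicitFunction hk' hinv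
  have hψ_contDiff : ∀ᶠ p in 𝓝 ((0 : ℝ), m), ContDiffAt ℝ k ψ p :=
    eventually_contDiffAt_implicitFunction hk' _ (.of_forall fun _ ↦ hG.contDiffAt) hinv
  have hφψ : φ =ᶠ[𝓝 (0, m)] fun p ↦ ψ p 1 := by
    have hcenter : picardDefect Y ((0, m), .const I m) = 0 := by
      ext t
      simp [picardDefect]
    filter_upwards [hφ.eventually_exists_picardDefect_eq_zero hδ hφ_cont
      (hG.contDiffAt.eventually_apply_eq_iff_implicitFunction hk' hinv)] with p ⟨γ, hiff, hγ, hγφ⟩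
    have hψp : ψ p = γ := hiff.1 (hγ.trans hcenter.symm)
    rw [hψp, hγφ]
  filter_upwards [hψ_contDiff, hφψ.eventually_nhds] with p hψp hφp
  have heval : ContDiffAt ℝ k (fun p ↦ ψ p 1) p :=
    (ContinuousMap.evalCLM ℝ (1 : I)).contDiff.contDiffAt.fun_comp p hψp
  exact heval.congr_of_eventuallyEq hφp

theorem fderiv_apply_one_zero {X : E → E} (hφ : IsLocalFlow X φ W) {p : ℝ × E} (hp : p ∈ W)
    (hφp : DifferentiableAt ℝ φ p) : fderiv ℝ φ p (1, 0) = X (φ p) := by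
  have hcurve : HasDerivAt (fun s ↦ (s, p.2)) (1, 0) p.1 :=
    (hasDerivAt_id p.1).prodMk (hasDerivAt_const p.1 p.2)
  exact (hφp.hasFDerivAt.comp_hasDerivAt p.1 hcurve).unique (hφ.hasDerivAt p hp)

theorem fderiv_apply_zero_prod {X : E → E} (hφ : IsLocalFlow X φ W) {m : E} (hW : W ∈ 𝓝 (0, m))
    (hφm : DifferentiableAt ℝ φ (0, m)) (u : E) : fderiv ℝ φ (0, m) (0, u) = u := by
  have hφ_slice := hφm.hasFDerivAt.comp m (hasFDerivAt_prodMk_right (0 : ℝ) m)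
  have hid : φ ∘ Prod.mk 0 =ᶠ[𝓝 m] id := by
    filter_upwards [(Continuous.prodMk_right (0 : ℝ)).continuousAt.preimage_mem_nhds hW] with y hy
    exact hφ.map_zero y hy
  exact congr($((hφ_slice.congr_of_eventuallyEq hid.symm).unique (hasFDerivAt_id m)) u)

end IsLocalFlow

theorem exists_isLocalFlow_contDiffOn [CompleteSpace E] [HasContDiffBump E] {k : ℕ∞} (hk : k ≠ 0)
    {U : Set E} (hU : IsOpen U) {X : E → E} (hX : ContDiffOn ℝ k X U) {m : E} (hm : m ∈ U) :
    ∃ φ W, IsOpen W ∧ (0, m) ∈ W ∧ MapsTo φ W U ∧ IsLocalFlow X φ W ∧ ContDiffOn ℝ k φ W := by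
  obtain ⟨Y, hY, hYX⟩ := exists_contDiff_eventuallyEq hU hX hm
  obtain ⟨φ, δ, hδ, hφ, hφ_cont⟩ := exists_isLocalFlow_continuousOn
    (hY.contDiffAt.of_le (m := 1) (by exact_mod_cast Order.one_le_iff_ne_zero.2 hk))
  have hφ_contDiff : ∀ᶠ p in 𝓝 (0, m), ContDiffAt ℝ k φ p :=
    hφ.eventually_contDiffAt (Y := ⟨Y, hY.continuous⟩) hk hY hδ hφ_cont
  have hφm : Tendsto φ (𝓝 (0, m)) (𝓝 m) := by
    have := (hφ_cont.continuousAt (ball_mem_nhds _ hδ)).tendsto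
    rwa [hφ.map_zero m (mem_ball_self hδ)] at this
  obtain ⟨W, hWsub, hW, hmW⟩ := _root_.eventually_nhds_iff.1 <| ((hφm.eventually hYX).and
    (hφm.eventually (hU.mem_nhds hm))).and (hφ_contDiff.and (ball_mem_nhds _ hδ))
  refine ⟨φ, W, hW, hmW, fun p hp ↦ (hWsub p hp).1.2, ⟨?_, ?_⟩, ?_⟩
  · exact fun y hy ↦ hφ.map_zero y (hWsub _ hy).2.2
  · exact fun p hp ↦ (hWsub p hp).1.1 ▸ hφ.hasDerivAt p (hWsub p hp).2.2
  · exact fun p hp ↦ (hWsub p hp).2.1.contDiffWithinAt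

end LocalFlow

section FlowBox

variable {E : Type u} {F : Type*} [NormedAddCommGroup E] [NormedSpace ℝ E] [NormedAddCommGroup F]
  [NormedSpace ℝ F]

theorem exists_clm_prod_smul_add_eq (T : F →L[ℝ] E) {a : F} (ha : a ≠ 0) :
    ∃ L : F →L[ℝ] ℝ × E, L a = (1, 0) ∧ ∀ q, (L q).1 • T a + (L q).2 = T q := by
  obtain ⟨P, hP⟩ := SeparatingDual.exists_eq_one (R := ℝ) ha
  exact ⟨P.prod (T - P.smulRight (T a)), by simp [hP], fun q ↦ by simp⟩

variable [CompleteSpace E] [HasContDiffBump E] {k : ℕ∞} {U : Set E} {X : E → E} {m : E} {a : F}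

theorem exists_flow_parametrization (hk : k ≠ 0) (hU : IsOpen U) (hX : ContDiffOn ℝ k X U)
    (hm : m ∈ U) (ha : a ≠ 0) (T : F ≃L[ℝ] E) (hT : T a = X m) :
    ∃ Ψ D, IsOpen D ∧ 0 ∈ D ∧ MapsTo Ψ D U ∧ ContDiffOn ℝ k Ψ D ∧ Ψ 0 = m ∧
      (fderiv ℝ Ψ 0).IsInvertible ∧ ∀ q ∈ D, fderiv ℝ Ψ q a = X (Ψ q) := by
  obtain ⟨φ, W, hW, hmW, hWU, hφ, hφ_contDiff⟩ := exists_isLocalFlow_contDiffOn hk hU hX hm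
  obtain ⟨L, hLa, hL⟩ := exists_clm_prod_smul_add_eq (T : F →L[ℝ] E) ha
  have hφ_diff (p : ℝ × E) (hp : p ∈ W) : DifferentiableAt ℝ φ p :=
    (hφ_contDiff.contDiffAt (hW.mem_nhds hp)).differentiableAt (by exact_mod_cast hk)
  let i : F → ℝ × E := fun q ↦ (0, m) + L q
  have hi : ContDiff ℝ k i := contDiff_const.add L.contDiff
  have hi0 : i 0 = (0, m) := by simp [i]
  have hiW : i 0 ∈ W := hi0 ▸ hmW
  have hΨ_deriv (q : F) (hq : i q ∈ W) : fderiv ℝ (φ ∘ i) q = fderiv ℝ φ (i q) ∘L L :=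
    ((hφ_diff _ hq).hasFDerivAt.comp q (L.hasFDerivAt.const_add _)).fderiv
  refine ⟨φ ∘ i, i ⁻¹' W, hW.preimage hi.continuous, hiW, fun q hq ↦ hWU hq,
    hφ_contDiff.comp hi.contDiffOn fun _ hq ↦ hq, ?_, ⟨T, ?_⟩, fun q hq ↦ ?_⟩
  · simp [hi0, hφ.map_zero m hmW]
  · ext q
    have hsplit : L q = (L q).1 • (1, 0) + (0, (L q).2) := by simp
    rw [hΨ_deriv 0 hiW, hi0, ContinuousLinearMap.comp_apply, hsplit, map_add, map_smul,
      hφ.fderiv_apply_one_zero hmW (hφ_diff _ hmW), hφ.map_zero m hmW,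
      hφ.fderiv_apply_zero_prod (hW.mem_nhds hmW) (hφ_diff _ hmW), ← hT]
    exact (hL q).symm
  · rw [hΨ_deriv q hq, ContinuousLinearMap.comp_apply, hLa,
      hφ.fderiv_apply_one_zero hq (hφ_diff _ hq), Function.comp_apply]

theorem exists_contDiffOn_straightening [CompleteSpace F] (hk : k ≠ 0) (hU : IsOpen U)
    (hX : ContDiffOn ℝ k X U) (hm : m ∈ U) (ha : a ≠ 0) (T : F ≃L[ℝ] E) (hT : T a = X m) :
    ∃ (V : Set E) (θ : E → F), IsOpen V ∧ m ∈ V ∧ V ⊆ U ∧ ContDiffOn ℝ k θ V ∧ θ m = 0 ∧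
      ∀ y ∈ V, (fderiv ℝ θ y).IsInvertible ∧ fderiv ℝ θ y (X y) = a := by
  obtain ⟨Ψ, D, hD, h0D, hDU, hΨ, rfl, hinv, hΨa⟩ :=
    exists_flow_parametrization hk hU hX hm ha T hT
  have hk' : (k : WithTop ℕ∞) ≠ 0 := by exact_mod_cast hk
  obtain ⟨e, rfl, h0e, heD, he_inv, he_symm⟩ :=
    exists_openPartialHomeomorph_of_contDiffOn hk' hD hΨ h0D hinv
  refine ⟨e.target, e.symm, e.open_target, e.map_source h0e, fun y hy ↦ ?_, he_symm,
    e.left_inv h0e, fun y hy ↦ ?_⟩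
  · exact e.right_inv hy ▸ hDU (heD (e.map_target hy))
  · have hyD : e.symm y ∈ D := heD (e.map_target hy)
    obtain ⟨S, hS⟩ := he_inv _ (e.map_target hy)
    have he_deriv : HasFDerivAt e (S : F →L[ℝ] E) (e.symm y) :=
      hS ▸ ((hΨ.contDiffAt (hD.mem_nhds hyD)).differentiableAt hk').hasFDerivAt
    have hSa : S a = X y := by
      have := hΨa _ hyD
      rwa [← hS, e.right_inv hy] at this
    rw [(e.hasFDerivAt_symm hy he_deriv).fderiv, ← hSa]
    exact ⟨⟨S.symm, rfl⟩, S.symm_apply_apply a⟩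

end FlowBox

theorem exists_continuousLinearEquiv_apply_eq_of_finrank_eq {E F : Type*}
    [NormedAddCommGroup E] [NormedSpace ℝ E] [FiniteDimensional ℝ E]
    [NormedAddCommGroup F] [NormedSpace ℝ F] [FiniteDimensional ℝ F]
    (h : Module.finrank ℝ F = Module.finrank ℝ E) {a : F} {b : E} (ha : a ≠ 0) (hb : b ≠ 0) :
    ∃ T : F ≃L[ℝ] E, T a = b := by
  let S : F ≃L[ℝ] E := .ofFinrankEq h
  obtain ⟨A, hA⟩ := SeparatingDual.exists_continuousLinearEquiv_apply_eq (R := ℝ)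
    (S.map_ne_zero_iff.2 ha) hb
  exact ⟨S.trans A, hA⟩

theorem exists_coordinates_fderiv_apply_eq_single {E : Type u} [NormedAddCommGroup E]
    [NormedSpace ℝ E] {n : ℕ} (hE : Module.finrank ℝ E = n + 1) {k : ℕ∞} (hk : k ≠ 0) {U : Set E}
    (hU : IsOpen U) {X : E → E} (hX : ContDiffOn ℝ k X U) {m : E} (hm : m ∈ U) (hXm : X m ≠ 0) :
    ∃ (V : Set E) (θ : E → Fin (n + 1) → ℝ), IsOpen V ∧ m ∈ V ∧ V ⊆ U ∧ ContDiffOn ℝ k θ V ∧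
      θ m = 0 ∧ ∀ y ∈ V, Function.Surjective (fderiv ℝ θ y) ∧
        ∀ j, fderiv ℝ (fun y ↦ θ y j) y (X y) = (Pi.single 0 1 : Fin (n + 1) → ℝ) j := by
  have : FiniteDimensional ℝ E := .of_finrank_eq_succ hE
  have : CompleteSpace E := FiniteDimensional.complete ℝ E
  have he₀ : (Pi.single 0 1 : Fin (n + 1) → ℝ) ≠ 0 := by simp
  obtain ⟨T, hT⟩ := exists_continuousLinearEquiv_apply_eq_of_finrank_eq (by simp [hE]) he₀ hXm
  obtain ⟨V, θ, hV, hmV, hVU, hθ, hθm, hθX⟩ :=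
    exists_contDiffOn_straightening hk hU hX hm he₀ T hT
  refine ⟨V, θ, hV, hmV, hVU, hθ, hθm, fun y hy ↦ ⟨(hθX y hy).1.bijective.2, fun j ↦ ?_⟩⟩
  have hθy : DifferentiableAt ℝ θ y :=
    (hθ.contDiffAt (hV.mem_nhds hy)).differentiableAt (by exact_mod_cast hk)
  rw [fderiv_apply hθy, ContinuousLinearMap.comp_apply, (hθX y hy).2,
    ContinuousLinearMap.proj_apply]

section HomogeneousCoordinates

variable {E : Type*} [NormedAddCommGroup E] [NormedSpace ℝ E] {X : E → E} {V : Set E}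

/-- `f` is homogeneous of weight `w` with respect to the vector field `X` on `V`: its derivative
along `X` is `w • f`. Differentiability of `f` is not included: `fderiv` is `0` without it. -/
def IsHomogeneousOn (X : E → E) (w : ℝ) (f : E → ℝ) (V : Set E) : Prop :=
  ∀ y ∈ V, fderiv ℝ f y (X y) = w * f y

theorem isHomogeneousOn_exp_mul {t : E → ℝ} (ht : ∀ y ∈ V, DifferentiableAt ℝ t y)
    (htX : ∀ y ∈ V, fderiv ℝ t y (X y) = 1) (w : ℝ) :
    IsHomogeneousOn X w (fun y ↦ Real.exp (w * t y)) V := by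
  intro y hy
  rw [((ht y hy).hasFDerivAt.const_mul w).exp.fderiv]
  simp [htX y hy, mul_comm]

theorem IsHomogeneousOn.mul {f g : E → ℝ} {v w : ℝ} (hf : IsHomogeneousOn X v f V)
    (hg : IsHomogeneousOn X w g V) (hf_diff : ∀ y ∈ V, DifferentiableAt ℝ f y)
    (hg_diff : ∀ y ∈ V, DifferentiableAt ℝ g y) :
    IsHomogeneousOn X (v + w) (fun y ↦ f y * g y) V := by
  intro y hy
  rw [fderiv_fun_mul (hf_diff y hy) (hg_diff y hy)]
  simp only [add_apply, smul_apply, hf y hy, hg y hy, smul_eq_mul]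
  ring

theorem IsHomogeneousOn.mul_exp_mul {f t : E → ℝ} {u : ℝ} (hf : IsHomogeneousOn X u f V)
    (hf_diff : ∀ y ∈ V, DifferentiableAt ℝ f y) (ht : ∀ y ∈ V, DifferentiableAt ℝ t y)
    (htX : ∀ y ∈ V, fderiv ℝ t y (X y) = 1) (v : ℝ) :
    IsHomogeneousOn X (u + v) (fun y ↦ f y * Real.exp (v * t y)) V :=
  hf.mul (isHomogeneousOn_exp_mul ht htX v) hf_diff fun y hy ↦ ((ht y hy).const_mul v).exp

theorem fderiv_mul_exp_mul {f t : E → ℝ} {y : E} (hf : DifferentiableAt ℝ f y)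
    (ht : DifferentiableAt ℝ t y) (v : ℝ) :
    fderiv ℝ (fun y ↦ f y * Real.exp (v * t y)) y =
      Real.exp (v * t y) • (fderiv ℝ f y + (v * f y) • fderiv ℝ t y) := by
  rw [fderiv_fun_mul hf (ht.const_mul v).exp, (ht.hasFDerivAt.const_mul v).exp.fderiv]
  module

theorem linearIndependent_cons_smul_add {𝕂 M : Type*} [Field 𝕂] [AddCommGroup M] [Module 𝕂 M]
    {n : ℕ} {ξ : Fin (n + 1) → M} (hξ : LinearIndependent 𝕂 ξ) {a : 𝕂} (ha : a ≠ 0)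
    {b : Fin n → 𝕂} (hb : ∀ i, b i ≠ 0) (c : Fin n → 𝕂) :
    LinearIndependent 𝕂
      (Fin.cons (a • ξ 0) fun i ↦ b i • (ξ i.succ + c i • ξ 0) : Fin (n + 1) → M) := by
  let c₀ : Fin (n + 1) → 𝕂 := Fin.cons 0 c
  let units : Fin (n + 1) → 𝕂ˣ := Fin.cons (Units.mk0 a ha) fun i ↦ Units.mk0 (b i) (hb i)
  have hshear : LinearIndependent 𝕂 (ξ + (c₀ · • ξ 0)) :=
    (linearIndependent_add_smul_iff (c := c₀) (i := 0) rfl).2 hξ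
  convert hshear.units_smul units using 1
  ext j
  cases j using Fin.cases <;> simp [c₀, units, Units.smul_def]

theorem linearIndependent_proj_comp {ι : Type*} {A : E →L[ℝ] ι → ℝ} (hA : Function.Surjective A) :
    LinearIndependent ℝ fun j ↦ (.proj j : (ι → ℝ) →L[ℝ] ℝ) ∘L A := by
  classical
  refine linearIndependent_iff'.2 fun s g hg j hj ↦ ?_
  obtain ⟨u, hu⟩ := hA (Pi.single j 1)
  simpa [hu, Pi.single_apply, hj] using congr($hg u)

theorem linearIndependent_fderiv_exp_mul_cons {n : ℕ} {θ : E → Fin (n + 1) → ℝ} {y : E}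
    (hθ : DifferentiableAt ℝ θ y) (hsurj : Function.Surjective (fderiv ℝ θ y)) {w : ℝ}
    (hw : w ≠ 0) (v : Fin n → ℝ) :
    LinearIndependent ℝ (Fin.cons (fderiv ℝ (fun y ↦ Real.exp (w * θ y 0)) y)
      fun i ↦ fderiv ℝ (fun y ↦ θ y i.succ * Real.exp (v i * θ y 0)) y :
        Fin (n + 1) → E →L[ℝ] ℝ) := by
  have hθ_coord := differentiableAt_pi.1 hθ
  have hindep : LinearIndependent ℝ fun j ↦ fderiv ℝ (fun y ↦ θ y j) y := by
    simpa only [fderiv_apply hθ] using linearIndependent_proj_comp hsurj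
  have hexp : fderiv ℝ (fun y ↦ Real.exp (w * θ y 0)) y =
      (Real.exp (w * θ y 0) * w) • fderiv ℝ (fun y ↦ θ y 0) y := by
    rw [((hθ_coord 0).hasFDerivAt.const_mul w).exp.fderiv, smul_smul]
  simp only [hexp, fderiv_mul_exp_mul (hθ_coord _) (hθ_coord 0)]
  exact linearIndependent_cons_smul_add hindep (mul_ne_zero (Real.exp_ne_zero _) hw)
    (fun _ ↦ Real.exp_ne_zero _) _

end HomogeneousCoordinates

theorem stmt_3_general {E : Type u} [NormedAddCommGroup E] [NormedSpace ℝ E] {n : ℕ}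
    (hE : Module.finrank ℝ E = n + 1) {k : ℕ∞} (hk : k ≠ 0) {U : Set E} (hU : IsOpen U)
    {X : E → E} (hX : ContDiffOn ℝ k X U) {m : E} (hm : m ∈ U) (hXm : X m ≠ 0)
    {w : ℝ} (hw : w ≠ 0) (v : Fin n → ℝ) :
    ∃ (V : Set E) (x : E → ℝ) (z : Fin n → E → ℝ),
      IsOpen V ∧ m ∈ V ∧ V ⊆ U ∧ ContDiffOn ℝ k x V ∧ (∀ i, ContDiffOn ℝ k (z i) V) ∧
      (∀ y ∈ V, LinearIndependent ℝ
        (Fin.cons (fderiv ℝ x y) (fun i ↦ fderiv ℝ (z i) y) : Fin (n + 1) → E →L[ℝ] ℝ)) ∧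
      x m = 1 ∧ (∀ i, z i m = 0) ∧
      IsHomogeneousOn X w x V ∧ ∀ i, IsHomogeneousOn X (v i) (z i) V := by
  obtain ⟨V, θ, hV, hmV, hVU, hθ, hθm, hθV⟩ :=
    exists_coordinates_fderiv_apply_eq_single hE hk hU hX hm hXm
  have hθ_coord : ∀ j, ContDiffOn ℝ k (fun y ↦ θ y j) V := contDiffOn_pi.1 hθ
  have hexp (c : ℝ) : ContDiffOn ℝ k (fun y ↦ Real.exp (c * θ y 0)) V :=
    (contDiffOn_const.mul (hθ_coord 0)).exp
  have hθ_diff (y : E) (hy : y ∈ V) : DifferentiableAt ℝ θ y :=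
    (hθ.contDiffAt (hV.mem_nhds hy)).differentiableAt (by exact_mod_cast hk)
  have hθ_coord_diff (j : Fin (n + 1)) (y : E) (hy : y ∈ V) :
      DifferentiableAt ℝ (fun y ↦ θ y j) y := differentiableAt_pi.1 (hθ_diff y hy) j
  have htime (y : E) (hy : y ∈ V) : fderiv ℝ (fun y ↦ θ y 0) y (X y) = 1 := by
    simpa using (hθV y hy).2 0
  have hinvariant (i : Fin n) : IsHomogeneousOn X 0 (fun y ↦ θ y i.succ) V := fun y hy ↦ by
    simp [(hθV y hy).2 i.succ]
  refine ⟨V, fun y ↦ Real.exp (w * θ y 0), fun i y ↦ θ y i.succ * Real.exp (v i * θ y 0),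
    hV, hmV, hVU, hexp w, fun i ↦ (hθ_coord i.succ).mul (hexp (v i)), fun y hy ↦ ?_,
    by simp [hθm], fun i ↦ by simp [hθm], isHomogeneousOn_exp_mul (hθ_coord_diff 0) htime w,
    fun i ↦ ?_⟩
  · exact linearIndependent_fderiv_exp_mul_cons (hθ_diff y hy) (hθV y hy).1 hw v
  · simpa only [zero_add] using
      (hinvariant i).mul_exp_mul (hθ_coord_diff i.succ) (hθ_coord_diff 0) htime (v i)

/-- A smooth vector field `X` non-vanishing at `m` admits, around `m`,
a system of homogeneous coordinates `(x, z², …, zⁿ)` with arbitrarily prescribed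
weights `w ≠ 0, v₂, …, vₙ`, with `x(m) = 1` and `zⁱ(m) = 0`. -/
theorem stmt_3 (n : ℕ) (U : Set (Fin (n + 1) → ℝ)) (hU : IsOpen U)
    (X : (Fin (n + 1) → ℝ) → (Fin (n + 1) → ℝ)) (hX : ContDiffOn ℝ (⊤ : ℕ∞) X U)
    (m : Fin (n + 1) → ℝ) (hm : m ∈ U) (hXm : X m ≠ 0)
    (w : ℝ) (hw : w ≠ 0) (v : Fin n → ℝ) :
    ∃ (V : Set (Fin (n + 1) → ℝ)) (x : (Fin (n + 1) → ℝ) → ℝ)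
      (z : Fin n → (Fin (n + 1) → ℝ) → ℝ),
      IsOpen V ∧ m ∈ V ∧ V ⊆ U ∧
      ContDiffOn ℝ (⊤ : ℕ∞) x V ∧ (∀ i, ContDiffOn ℝ (⊤ : ℕ∞) (z i) V) ∧
      (∀ y ∈ V, LinearIndependent ℝ
        (Fin.cons (fderiv ℝ x y) (fun i => fderiv ℝ (z i) y) :
          Fin (n + 1) → (Fin (n + 1) → ℝ) →L[ℝ] ℝ)) ∧
      x m = 1 ∧ (∀ i, z i m = 0) ∧
      (∀ y ∈ V, fderiv ℝ x y (X y) = w * x y) ∧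
      (∀ i, ∀ y ∈ V, fderiv ℝ (z i) y (X y) = v i * z i y) := by
  exact stmt_3_general (by simp) (by simp) hU hX hm hXm hw v
end

section
/- Invariance of weights at a zero of the weight vector field: let w₁,…,wₙ ∈ ℝ and ∇(x) = (w₁x₁,…,wₙxₙ) on ℝⁿ (so ∇(0) = 0). Suppose y¹,…,yⁿ are smooth real functions on an open neighbourhood of 0 ∈ ℝⁿ whose differentials at 0 are linearly independent, and suppose each yᵃ is homogeneous of some weight vₐ, i.e., Σⱼ wⱼ xⱼ ∂ⱼyᵃ(x) = vₐ·yᵃ(x) near 0. Then the weights agree up to permutation: there is a bijection σ of {1,…,n} with vₐ = w_{σ(a)} for every a. -/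
/-!
On the axis of `∇` through a vector `e` with `∇ e = w e`, homogeneity reads
`w s g'(s) = v g(s)` for `g s = y (s e)`. Dividing by `s`, the derivative of `w g` tends to
`v g'(0)` as `s → 0`. By the mean value theorem the derivative of `w g` at `0` is this limit, so
`w g'(0) = v g'(0)`; hence `v = w` as soon as `dy(0)` does not vanish on `e`. Finally, Hall's
marriage theorem picks, for linearly independent differentials, distinct axes on which they do
not vanish.
-/

open Filter Topology

section Calculus

variable {E F : Type*} [NormedAddCommGroup E] [NormedSpace ℝ E]
  [NormedAddCommGroup F] [NormedSpace ℝ F]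

theorem deriv_eq_of_tendsto_deriv_nhdsGT {f : ℝ → F} {a : ℝ} {f' : F}
    (hf : ∀ᶠ x in 𝓝 a, DifferentiableAt ℝ f x) (hlim : Tendsto (deriv f) (𝓝[>] a) (𝓝 f')) :
    deriv f a = f' := by
  have hright : HasDerivWithinAt f f' (Set.Ici a) a :=
    hasDerivWithinAt_Ici_of_tendsto_deriv (s := {x | DifferentiableAt ℝ f x})
      (fun x hx => hx.differentiableWithinAt)
      hf.self_of_nhds.continuousAt.continuousWithinAt (mem_nhdsWithin_of_mem_nhds hf) hlim
  exact (uniqueDiffWithinAt_Ici a).eq_deriv _ hf.self_of_nhds.hasDerivAt.hasDerivWithinAt hright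

theorem smul_deriv_zero_eq_of_homogeneous {g : ℝ → F} {w v : ℝ}
    (hg : ∀ᶠ s in 𝓝 0, DifferentiableAt ℝ g s)
    (hhom : ∀ᶠ s in 𝓝 0, (s * w) • deriv g s = v • g s) :
    w • deriv g 0 = v • deriv g 0 := by
  have hvg : v • g 0 = 0 := by simpa using hhom.self_of_nhds.symm
  have hslope : Tendsto (fun s => v • slope g 0 s) (𝓝[>] 0) (𝓝 (v • deriv g 0)) :=
    (hg.self_of_nhds.hasDerivAt.tendsto_slope.mono_left (nhdsGT_le_nhdsNE 0)).const_smul v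
  have hderiv : (fun s => v • slope g 0 s) =ᶠ[𝓝[>] 0] deriv (w • g) := by
    filter_upwards [hhom.filter_mono nhdsWithin_le_nhds, self_mem_nhdsWithin] with s hs hpos
    have hs0 : s ≠ 0 := ne_of_gt hpos
    calc v • slope g 0 s = s⁻¹ • (v • g s) := by
          rw [slope_def_module, sub_zero, smul_comm, smul_sub, hvg, sub_zero]
      _ = w • deriv g s := by rw [← hs, mul_smul, inv_smul_smul₀ hs0]
      _ = deriv (w • g) s := (deriv_const_smul_field w g).symm
  calc w • deriv g 0 = deriv (w • g) 0 := (deriv_const_smul_field w g).symm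
    _ = v • deriv g 0 := deriv_eq_of_tendsto_deriv_nhdsGT
        (hg.mono fun _ hs => hs.const_smul w) (hslope.congr' hderiv)

theorem smul_fderiv_zero_eq_of_homogeneous {A : Module.End ℝ E} {e : E} {w v : ℝ}
    (he : A e = w • e) {f : E → F} (hf : ∀ᶠ x in 𝓝 0, DifferentiableAt ℝ f x)
    (hhom : ∀ᶠ x in 𝓝 0, fderiv ℝ f x (A x) = v • f x) :
    w • fderiv ℝ f 0 e = v • fderiv ℝ f 0 e := by
  have haxis : Tendsto (fun s : ℝ => s • e) (𝓝 0) (𝓝 0) :=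
    Continuous.tendsto' (by fun_prop) 0 0 (zero_smul ℝ e)
  have hderiv (s : ℝ) (hs : DifferentiableAt ℝ f (s • e)) :
      HasDerivAt (fun t : ℝ => f (t • e)) (fderiv ℝ f (s • e) e) s := by
    simpa [Function.comp_def] using
      hs.hasFDerivAt.comp_hasDerivAt s ((hasDerivAt_id s).smul_const e)
  have hdiff := haxis.eventually hf
  have hzero : deriv (fun t : ℝ => f (t • e)) 0 = fderiv ℝ f 0 e := by
    simpa using (hderiv 0 hdiff.self_of_nhds).deriv
  rw [← hzero]
  refine smul_deriv_zero_eq_of_homogeneous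
    (hdiff.mono fun s hs => (hderiv s hs).differentiableAt) ?_
  filter_upwards [hdiff, haxis.eventually hhom] with s hs heq
  rw [(hderiv s hs).deriv, ← heq, map_smul, he, smul_smul, map_smul]

end Calculus

section LinearAlgebra

variable {R M ι κ : Type*} [AddCommMonoid M]

theorem exists_injective_repr_ne_zero_of_linearIndependent [Semiring R] [Module R M]
    [StrongRankCondition R] (b : Module.Basis ι R M) {x : κ → M} (hx : LinearIndependent R x) :
    ∃ σ : κ → ι, Function.Injective σ ∧ ∀ a, b.repr (x a) (σ a) ≠ 0 := by
  classical
  simp_rw [← Finsupp.mem_support_iff]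
  refine (Finset.all_card_le_biUnion_card_iff_exists_injective
    fun a => (b.repr (x a)).support).mp fun s => ?_
  set t := s.biUnion fun a => (b.repr (x a)).support
  have hspan : Set.range (fun a : s => x a) ⊆ Submodule.span R (t.image b : Set M) := by
    rintro _ ⟨a, rfl⟩
    rw [Finset.coe_image, SetLike.mem_coe, b.mem_span_image, Finset.coe_subset]
    exact Finset.subset_biUnion_of_mem (fun a => (b.repr (x a)).support) a.2
  have hcard : s.card ≤ (t.image b).card := by
    simpa using linearIndependent_le_span' _ (hx.comp _ Subtype.val_injective) _ hspan
  exact hcard.trans Finset.card_image_le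

theorem exists_injective_apply_basis_ne_zero_of_linearIndependent [CommSemiring R] [Module R M]
    [StrongRankCondition R] [Finite ι] (b : Module.Basis ι R M) {f : κ → Module.Dual R M}
    (hf : LinearIndependent R f) :
    ∃ σ : κ → ι, Function.Injective σ ∧ ∀ a, f a (b (σ a)) ≠ 0 := by
  classical
  simpa only [b.dualBasis_repr] using
    exists_injective_repr_ne_zero_of_linearIndependent b.dualBasis hf

end LinearAlgebra

theorem stmt_4_general {E ι κ : Type*} [NormedAddCommGroup E] [NormedSpace ℝ E] [Finite ι]
    (b : Module.Basis ι ℝ E) (A : Module.End ℝ E) (w : ι → ℝ) (hA : ∀ j, A (b j) = w j • b j)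
    (y : κ → E → ℝ) (hy : ∀ a, ∀ᶠ x in 𝓝 0, DifferentiableAt ℝ (y a) x)
    (hind : LinearIndependent ℝ (fun a => fderiv ℝ (y a) 0))
    (v : κ → ℝ) (hhom : ∀ a, ∀ᶠ x in 𝓝 0, fderiv ℝ (y a) x (A x) = v a * y a x) :
    ∃ σ : κ → ι, Function.Injective σ ∧ ∀ a, v a = w (σ a) := by
  have hdual : LinearIndependent ℝ (fun a => (fderiv ℝ (y a) 0 : Module.Dual ℝ E)) :=
    hind.map_injOn (ContinuousLinearMap.coeLM ℝ) ContinuousLinearMap.coe_injective.injOn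
  obtain ⟨σ, hσ, hne⟩ := exists_injective_apply_basis_ne_zero_of_linearIndependent b hdual
  refine ⟨σ, hσ, fun a => mul_right_cancel₀ (hne a) ?_⟩
  exact (smul_fderiv_zero_eq_of_homogeneous (hA (σ a)) (hy a) (hhom a)).symm

/-- Invariance of weights at a zero of the weight vector field
`∇(x) = (w₁x₁, …, wₙxₙ)`: if `y¹, …, yⁿ` are smooth functions near `0 ∈ ℝⁿ`, with linearly
independent differentials at `0`, each homogeneous of weight `vₐ`, then the weights `(vₐ)`
agree with `(wₐ)` up to a permutation. -/
theorem stmt_4 (n : ℕ) (w : Fin n → ℝ) (U : Set (Fin n → ℝ)) (hU : IsOpen U)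
    (h0 : (0 : Fin n → ℝ) ∈ U)
    (y : Fin n → (Fin n → ℝ) → ℝ) (hy : ∀ a, ContDiffOn ℝ (⊤ : ℕ∞) (y a) U)
    (hind : LinearIndependent ℝ (fun a => fderiv ℝ (y a) 0))
    (v : Fin n → ℝ)
    (hhom : ∀ a, ∀ x ∈ U, fderiv ℝ (y a) x (fun j => w j * x j) = v a * y a x) :
    ∃ σ : Equiv.Perm (Fin n), ∀ a, v a = w (σ a) := by
  have hdiag (j : Fin n) :
      LinearMap.mulLeft ℝ w (Pi.basisFun ℝ (Fin n) j) = w j • Pi.basisFun ℝ (Fin n) j := by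
    simp [← Pi.single_mul_right, ← Pi.single_smul]
  have hnear : ∀ᶠ x in 𝓝 0, x ∈ U := hU.eventually_mem h0
  have hdiff (a : Fin n) : ∀ᶠ x in 𝓝 0, DifferentiableAt ℝ (y a) x :=
    hnear.mono fun x hx => ((hy a).contDiffAt (hU.mem_nhds hx)).differentiableAt (by simp)
  obtain ⟨σ, hσ, hweight⟩ := stmt_4_general (Pi.basisFun ℝ (Fin n)) (LinearMap.mulLeft ℝ w) w
    hdiag y hdiff hind v fun a => hnear.mono (hhom a)
  exact ⟨.ofBijective σ (Finite.injective_iff_bijective.mp hσ), hweight⟩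
end

section
/- Homogeneous solution of ∂f/∂y¹ = g: let w₁,…,wₙ, w ∈ ℝ, let ∇(y) = (w₁y₁,…,wₙyₙ) on ℝⁿ, and let g : ℝⁿ → ℝ be a smooth function homogeneous of weight w with respect to ∇. Then the function f(y) := ∫₀^{y₁} g(s, y₂, …, yₙ) ds is smooth, satisfies ∂f/∂y₁ = g on ℝⁿ, is homogeneous of weight w + w₁ with respect to ∇ (i.e., Σⱼ wⱼ yⱼ ∂ⱼf = (w + w₁)·f), and satisfies f(0) = 0. -/
/-!
Substituting `s = t y₁` turns `f` into the product of the coordinate `y₁` and the average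
`∫₀¹ g(t y₁, y₂, …, yₙ) dt`. The average is an integral over a fixed interval, so it is as smooth
as `g`; since rescaling one coordinate commutes with the diagonal field `∇`, it also has the
weight of `g`. The factor `y₁` has weight `w₁`, and weights add under multiplication.
-/

open Function MeasureTheory Set Topology

universe u

section ParametricIntegral

theorem exists_eventually_forall_norm_le_of_isCompact {X Y F : Type*} [TopologicalSpace X]
    [TopologicalSpace Y] [SeminormedAddCommGroup F] {f : X → Y → F} (hf : Continuous (uncurry f))
    {K : Set Y} (hK : IsCompact K) (x₀ : X) : ∃ C, ∀ᶠ x in 𝓝 x₀, ∀ y ∈ K, ‖f x y‖ ≤ C := by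
  obtain ⟨C, hC⟩ := hK.exists_bound_of_continuousOn (hf.uncurry_left x₀).continuousOn
  refine ⟨C + 1, hK.eventually_forall_of_forall_eventually fun y hy ↦ ?_⟩
  have hlt : ‖uncurry f (x₀, y)‖ < C + 1 := (hC y hy).trans_lt (lt_add_one C)
  exact (hf.norm.continuousAt.eventually_lt_const hlt).mono fun _ h ↦ h.le

variable {E F : Type*} [NormedAddCommGroup E] [NormedSpace ℝ E] [NormedAddCommGroup F]
  [NormedSpace ℝ F] {G : E → ℝ → F} {μ : Measure ℝ} [IsLocallyFiniteMeasure μ]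

theorem contDiff_uncurry_fderiv {m n : WithTop ℕ∞} (hG : ContDiff ℝ n (uncurry G))
    (hmn : m + 1 ≤ n) : ContDiff ℝ m (uncurry fun x t ↦ fderiv ℝ (G · t) x) :=
  ContDiff.fderiv (f := fun (p : E × ℝ) x ↦ G x p.2)
    (hG.comp (contDiff_snd.prodMk (contDiff_snd.comp contDiff_fst))) contDiff_fst hmn

theorem continuous_uncurry_fderiv (hG : ContDiff ℝ 1 (uncurry G)) :
    Continuous (uncurry fun x t ↦ fderiv ℝ (G · t) x) :=
  (contDiff_uncurry_fderiv (m := 0) hG (by simp)).continuous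

theorem hasFDerivAt_intervalIntegral (hG : ContDiff ℝ 1 (uncurry G)) (a b : ℝ) (x₀ : E) :
    HasFDerivAt (fun x ↦ ∫ t in a..b, G x t ∂μ) (∫ t in a..b, fderiv ℝ (G · t) x₀ ∂μ) x₀ := by
  have hG' := continuous_uncurry_fderiv hG
  have hdiff (t : ℝ) : Differentiable ℝ (G · t) :=
    (hG.comp (contDiff_prodMk_left t)).differentiable one_ne_zero
  obtain ⟨C, hC⟩ :=
    exists_eventually_forall_norm_le_of_isCompact hG' (isCompact_uIcc (a := a) (b := b)) x₀
  exact intervalIntegral.hasFDerivAt_integral_of_dominated_of_fderiv_le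
    (F' := fun x t ↦ fderiv ℝ (G · t) x) (bound := fun _ ↦ C) hC
    (.of_forall fun x ↦ (hG.continuous.uncurry_left x).aestronglyMeasurable)
    ((hG.continuous.uncurry_left x₀).intervalIntegrable a b)
    (hG'.uncurry_left x₀).aestronglyMeasurable
    (.of_forall fun t ht x hx ↦ hx t (uIoc_subset_uIcc ht))
    intervalIntegrable_const
    (.of_forall fun t _ x _ ↦ (hdiff t x).hasFDerivAt)

-- The induction replaces `F` by `E →L[ℝ] F`, so `E` and `F` must share a universe.
theorem contDiff_intervalIntegral {E F : Type u} [NormedAddCommGroup E] [NormedSpace ℝ E]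
    [NormedAddCommGroup F] [NormedSpace ℝ F] {G : E → ℝ → F} [NullSingletonClass μ] {n : ℕ∞}
    (hG : ContDiff ℝ n (uncurry G)) (a b : ℝ) :
    ContDiff ℝ n fun x ↦ ∫ t in a..b, G x t ∂μ := by
  refine contDiff_iff_forall_nat_le.2 fun m hmn ↦ ?_
  replace hG : ContDiff ℝ m (uncurry G) := hG.of_le (mod_cast hmn)
  clear hmn
  induction m generalizing F with
  | zero =>
    exact contDiff_zero.2 <|
      intervalIntegral.continuous_parametric_intervalIntegral_of_continuous' hG.continuous a b
  | succ m ih =>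
    push_cast at hG ⊢
    exact contDiff_succ_iff_hasFDerivAt.2 ⟨_, ih (contDiff_uncurry_fderiv hG le_rfl),
      hasFDerivAt_intervalIntegral (hG.of_le le_add_self) a b⟩

end ParametricIntegral

section Homogeneous

variable {ι E : Type*} [NormedAddCommGroup E] [NormedSpace ℝ E]

/-- Homogeneity of weight `k` with respect to the diagonal vector field `y ↦ (wⱼ yⱼ)ⱼ`, which is
written as the pointwise product `w * y`. It is meant for differentiable `f`: elsewhere `fderiv`
takes the value `0`. -/
def IsHomogeneousOfWeight (w : ι → ℝ) (k : ℝ) (f : (ι → ℝ) → E) : Prop :=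
  ∀ y, fderiv ℝ f y (w * y) = k • f y

namespace IsHomogeneousOfWeight

variable {w : ι → ℝ} {k : ℝ}

theorem coord (w : ι → ℝ) (i : ι) : IsHomogeneousOfWeight w (w i) fun y ↦ y i := fun y ↦ by
  simp [(hasFDerivAt_apply (𝕜 := ℝ) i y).fderiv]

theorem smul [Finite ι] {l : ℝ} {φ : (ι → ℝ) → ℝ} {f : (ι → ℝ) → E}
    (hφ : IsHomogeneousOfWeight w l φ) (hf : IsHomogeneousOfWeight w k f)
    (hφd : Differentiable ℝ φ) (hfd : Differentiable ℝ f) :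
    IsHomogeneousOfWeight w (k + l) fun y ↦ φ y • f y := fun y ↦ by
  cases nonempty_fintype ι
  calc fderiv ℝ (fun y ↦ φ y • f y) y (w * y)
      = φ y • fderiv ℝ f y (w * y) + fderiv ℝ φ y (w * y) • f y := by
        rw [fderiv_fun_smul (hφd y) (hfd y)]; rfl
    _ = φ y • k • f y + (l • φ y) • f y := by rw [hf y, hφ y]
    _ = (k + l) • φ y • f y := by module

theorem comp_mul_left [Finite ι] {f : (ι → ℝ) → E} (hf : IsHomogeneousOfWeight w k f)
    (hfd : Differentiable ℝ f) (c : ι → ℝ) : IsHomogeneousOfWeight w k fun y ↦ f (c * y) :=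
  fun y ↦ by
  cases nonempty_fintype ι
  have hcomp : HasFDerivAt (fun y ↦ f (c * y))
      ((fderiv ℝ f (c * y)).comp (ContinuousLinearMap.mul ℝ (ι → ℝ) c)) y :=
    (hfd (c * y)).hasFDerivAt.comp y (ContinuousLinearMap.mul ℝ (ι → ℝ) c).hasFDerivAt
  calc fderiv ℝ (fun y ↦ f (c * y)) y (w * y)
      = fderiv ℝ f (c * y) (c * (w * y)) := by rw [hcomp.fderiv]; rfl
    _ = fderiv ℝ f (c * y) (w * (c * y)) := by rw [mul_left_comm]
    _ = k • f (c * y) := hf (c * y)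

theorem intervalIntegral [Fintype ι] {μ : Measure ℝ} [IsLocallyFiniteMeasure μ]
    {G : (ι → ℝ) → ℝ → E}
    (hhom : ∀ t, IsHomogeneousOfWeight w k (G · t)) (hG : ContDiff ℝ 1 (uncurry G)) (a b : ℝ) :
    IsHomogeneousOfWeight w k fun y ↦ ∫ t in a..b, G y t ∂μ := fun y ↦ by
  have hint : IntervalIntegrable (fun t ↦ fderiv ℝ (G · t) y) μ a b :=
    ((continuous_uncurry_fderiv hG).uncurry_left y).intervalIntegrable a b
  calc fderiv ℝ (fun y ↦ ∫ t in a..b, G y t ∂μ) y (w * y)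
      = ∫ t in a..b, fderiv ℝ (G · t) y (w * y) ∂μ := by
        rw [(hasFDerivAt_intervalIntegral hG a b y).fderiv,
          ContinuousLinearMap.intervalIntegral_apply hint]
    _ = ∫ t in a..b, k • G y t ∂μ := by simp only [fun t ↦ hhom t y]
    _ = k • ∫ t in a..b, G y t ∂μ := intervalIntegral.integral_smul k _

end IsHomogeneousOfWeight

end Homogeneous

section CoordPrimitive

variable {ι E : Type u} [DecidableEq ι] [NormedAddCommGroup E] [NormedSpace ℝ E] {g : (ι → ℝ) → E}

/-- The primitive of `g` in the `i`-th coordinate that vanishes on the hyperplane `yᵢ = 0`. -/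
noncomputable def coordPrimitive (i : ι) (g : (ι → ℝ) → E) (y : ι → ℝ) : E :=
  ∫ s in (0 : ℝ)..y i, g (update y i s)

/-- The mean of `g` over the segment from the projection of `y` to the hyperplane `yᵢ = 0` up to
`y` itself. Multiplication by `update 1 i t` rescales the `i`-th coordinate by `t`. -/
noncomputable def coordAverage (i : ι) (g : (ι → ℝ) → E) (y : ι → ℝ) : E :=
  ∫ t in (0 : ℝ)..1, g (update (1 : ι → ℝ) i t * y)

theorem coordPrimitive_eq_smul_coordAverage (i : ι) (g : (ι → ℝ) → E) :
    coordPrimitive i g = fun y ↦ y i • coordAverage i g y := by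
  funext y
  have hscale (t : ℝ) : update (1 : ι → ℝ) i t * y = update y i (t * y i) := by
    simpa using (update_mul 1 y i t (y i)).symm
  simp only [coordPrimitive, coordAverage, hscale]
  simpa using (intervalIntegral.smul_integral_comp_mul_right (a := 0) (b := 1)
    (fun s ↦ g (update y i s)) (y i)).symm

theorem hasDerivAt_coordPrimitive_update [CompleteSpace E] (hg : Continuous g) (i : ι)
    (y : ι → ℝ) : HasDerivAt (fun s ↦ coordPrimitive i g (update y i s)) (g y) (y i) := by
  have hcont : Continuous fun s ↦ g (update y i s) :=
    hg.comp (continuous_const.update i continuous_id)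
  simpa [coordPrimitive] using intervalIntegral.integral_hasDerivAt_right
    (hcont.intervalIntegrable 0 (y i)) (hcont.stronglyMeasurableAtFilter _ _) hcont.continuousAt

variable [Fintype ι]

theorem contDiff_uncurry_comp_update_one_mul {n : WithTop ℕ∞} (hg : ContDiff ℝ n g) (i : ι) :
    ContDiff ℝ n (uncurry fun y t ↦ g (update (1 : ι → ℝ) i t * y)) :=
  have hscale : ContDiff ℝ n (update (1 : ι → ℝ) i) := contDiff_update n 1 i
  hg.comp ((hscale.comp contDiff_snd).mul contDiff_fst)

theorem contDiff_coordAverage {n : ℕ∞} (hg : ContDiff ℝ n g) (i : ι) :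
    ContDiff ℝ n (coordAverage i g) :=
  contDiff_intervalIntegral (contDiff_uncurry_comp_update_one_mul hg i) 0 1

theorem contDiff_coordPrimitive {n : ℕ∞} (hg : ContDiff ℝ n g) (i : ι) :
    ContDiff ℝ n (coordPrimitive i g) := by
  rw [coordPrimitive_eq_smul_coordAverage]
  exact (contDiff_apply ℝ ℝ i).smul (contDiff_coordAverage hg i)

theorem fderiv_coordPrimitive_single [CompleteSpace E] (hg : ContDiff ℝ 1 g) (i : ι)
    (y : ι → ℝ) : fderiv ℝ (coordPrimitive i g) y (Pi.single i 1) = g y := by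
  have hdiff : DifferentiableAt ℝ (coordPrimitive i g) (update y i (y i)) :=
    (contDiff_coordPrimitive (n := 1) hg i).differentiable one_ne_zero _
  have hchain := hdiff.hasFDerivAt.comp_hasDerivAt (y i) (hasDerivAt_update y i (y i))
  rw [update_eq_self] at hchain
  exact hchain.unique (hasDerivAt_coordPrimitive_update hg.continuous i y)

theorem IsHomogeneousOfWeight.coordAverage {w : ι → ℝ} {k : ℝ}
    (hhom : IsHomogeneousOfWeight w k g) (hg : ContDiff ℝ 1 g) (i : ι) :
    IsHomogeneousOfWeight w k (coordAverage i g) :=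
  .intervalIntegral (μ := volume)
    (fun t ↦ hhom.comp_mul_left (hg.differentiable one_ne_zero) (update 1 i t))
    (contDiff_uncurry_comp_update_one_mul hg i) 0 1

theorem IsHomogeneousOfWeight.coordPrimitive {w : ι → ℝ} {k : ℝ}
    (hhom : IsHomogeneousOfWeight w k g) (hg : ContDiff ℝ 1 g) (i : ι) :
    IsHomogeneousOfWeight w (k + w i) (coordPrimitive i g) := by
  rw [coordPrimitive_eq_smul_coordAverage]
  exact (IsHomogeneousOfWeight.coord w i).smul (hhom.coordAverage hg i) (differentiable_apply i)
    ((contDiff_coordAverage (n := 1) hg i).differentiable one_ne_zero)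

theorem stmt_5_general [CompleteSpace E] {n : ℕ∞} (hn : 1 ≤ n) (i : ι) {w : ι → ℝ} {k : ℝ}
    (hg : ContDiff ℝ n g) (hhom : IsHomogeneousOfWeight w k g) :
    ContDiff ℝ n (coordPrimitive i g) ∧
    (∀ y, fderiv ℝ (coordPrimitive i g) y (Pi.single i 1) = g y) ∧
    IsHomogeneousOfWeight w (k + w i) (coordPrimitive i g) ∧
    coordPrimitive i g 0 = 0 := by
  have hg₁ : ContDiff ℝ 1 g := hg.of_le (mod_cast hn)
  exact ⟨contDiff_coordPrimitive hg i, fderiv_coordPrimitive_single hg₁ i,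
    hhom.coordPrimitive hg₁ i, intervalIntegral.integral_same⟩

end CoordPrimitive

/-- Homogeneous solution of `∂f/∂y¹ = g`: if `g` is smooth and homogeneous of
weight `wt` with respect to `∇(y) = (w₁y₁, …, wₙyₙ)`, then
`f(y) = ∫₀^{y₁} g(s, y₂, …, yₙ) ds` is smooth, solves `∂f/∂y₁ = g`, is homogeneous of weight
`wt + w₁`, and vanishes at the origin. -/
theorem stmt_5 (n : ℕ) (w : Fin (n + 1) → ℝ) (wt : ℝ)
    (g : (Fin (n + 1) → ℝ) → ℝ) (hg : ContDiff ℝ (⊤ : ℕ∞) g)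
    (hhom : ∀ y, fderiv ℝ g y (fun j => w j * y j) = wt * g y)
    (f : (Fin (n + 1) → ℝ) → ℝ)
    (hf : ∀ y, f y = ∫ s in (0:ℝ)..(y 0), g (Function.update y 0 s)) :
    ContDiff ℝ (⊤ : ℕ∞) f ∧
    (∀ y, fderiv ℝ f y (Pi.single 0 1) = g y) ∧
    (∀ y, fderiv ℝ f y (fun j => w j * y j) = (wt + w 0) * f y) ∧
    f 0 = 0 := by
  obtain rfl : f = coordPrimitive 0 g := funext hf
  exact stmt_5_general le_top 0 hg hhom
end
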